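/- Let V be a 2n-dimensional real inner product space with compatible complex structure J, let ω be a covector on V with dual vector P (so g(P,X) = ω(X)), and set L(X,Y) := ω(X)ω(Y) + ω(JX)ω(JY) + (1/2)ω(P) g(X,Y). If R := −E_L, then for every orthonormal basis (e_i): the Ricci contraction ρ(Y,Z) := Σ_i g(R(e_i,Y)Z, e_i) equals −2(n+2){ω(Y)ω(Z) + ω(JY)ω(JZ) + ω(P) g(Y,Z)}, and the scalar trace τ := Σ_i ρ(e_i,e_i) equals −4(n+1)(n+2) ω(P). -/

import Mathlib

open RealInnerProductSpace

/-!
The Ricci contraction of `E_Q` is the trace of `X ↦ E_Q(X, Y)Z`, which is a combination of the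
identity, `Q̂`, `J`, `J ∘ Q̂` and rank-one maps. The traces of `J` and `J ∘ Q̂` vanish because `J`
is skew-adjoint and `Q̂` is symmetric, and the rank-one maps all contribute multiples of
`Q(Y, Z)`. In real dimension `d` this gives `Ric = (d + 4) Q + (tr Q̂) g`, hence scalar trace
`2 (d + 2) tr Q̂`. For `Q = L` and `d = 2n` the operator `Q̂` is explicit, with trace
`(n + 2) ω(P)`.
-/

section

variable {V : Type*} [NormedAddCommGroup V] [InnerProductSpace ℝ V]

/-- The map `X ↦ E_Q(X, Y)Z`, where `E_Q` is the Kähler analogue of the Kulkarni–Nomizu product of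
the metric with `Q`. The form `Q` is encoded by the operator `A = Q̂`, so that `Q(X, Y) = ⟪A X, Y⟫`;
fixing `Y` and `Z` makes the Ricci contraction the trace of this endomorphism. -/
noncomputable def kahlerKulkarniNomizu (J A : V →ₗ[ℝ] V) (Y Z : V) : V →ₗ[ℝ] V :=
  ⟪A Y, Z⟫ • .id - (innerₗ V Z ∘ₗ A).smulRight Y
    + ⟪Y, Z⟫ • A - (innerₗ V Z).smulRight (A Y)
    + ⟪A (J Y), Z⟫ • J - (innerₗ V Z ∘ₗ A ∘ₗ J).smulRight (J Y)
    - (2 : ℝ) • (innerₗ V Y ∘ₗ A ∘ₗ J).smulRight (J Z)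
    + ⟪J Y, Z⟫ • (J ∘ₗ A) - (innerₗ V Z ∘ₗ J).smulRight (J (A Y))
    - (2 : ℝ) • (innerₗ V Y ∘ₗ J).smulRight (J (A Z))

theorem kahlerKulkarniNomizu_apply (J A : V →ₗ[ℝ] V) (X Y Z : V) :
    kahlerKulkarniNomizu J A Y Z X =
      ⟪A Y, Z⟫ • X - ⟪A X, Z⟫ • Y + ⟪Y, Z⟫ • A X - ⟪X, Z⟫ • A Y
        + ⟪A (J Y), Z⟫ • J X - ⟪A (J X), Z⟫ • J Y - (2 * ⟪A (J X), Y⟫) • J Z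
        + ⟪J Y, Z⟫ • J (A X) - ⟪J X, Z⟫ • J (A Y) - (2 * ⟪J X, Y⟫) • J (A Z) := by
  simp [kahlerKulkarniNomizu, mul_smul, real_inner_comm]

theorem inner_map_eq_neg_inner_map_of_map_map_eq_neg {J : V →ₗ[ℝ] V}
    (hJiso : ∀ X Y, ⟪J X, J Y⟫ = ⟪X, Y⟫) (hJJ : ∀ X, J (J X) = -X) (X Y : V) :
    ⟪J X, Y⟫ = -⟪X, J Y⟫ := by
  rw [← hJiso X (J Y), hJJ, inner_neg_right, neg_neg]

theorem eq_smulRight_sub_smulRight_add_smul_id {J A : V →ₗ[ℝ] V} {ω : V →ₗ[ℝ] ℝ} {P : V} {c : ℝ}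
    (hJ : ∀ X Y, ⟪J X, Y⟫ = -⟪X, J Y⟫) (hP : ∀ X, ⟪P, X⟫ = ω X)
    (hA : ∀ X Y, ⟪A X, Y⟫ = ω X * ω Y + ω (J X) * ω (J Y) + c * ⟪X, Y⟫) :
    A = ω.smulRight P - (ω ∘ₗ J).smulRight (J P) + c • .id := by
  refine LinearMap.ext fun X => ext_inner_right ℝ fun Y => ?_
  simp [hA, inner_add_left, inner_sub_left, real_inner_smul_left, hJ P, hP]

theorem trace_eq_sum_inner_map {ι : Type*} [Fintype ι] (e : OrthonormalBasis ι ℝ V)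
    (T : V →ₗ[ℝ] V) : LinearMap.trace ℝ V T = ∑ i, ⟪T (e i), e i⟫ := by
  simp only [LinearMap.trace_eq_sum_inner T e, real_inner_comm]

variable [FiniteDimensional ℝ V]

theorem trace_comp_eq_zero_of_skew_of_isSymmetric {J A : V →ₗ[ℝ] V}
    (hJ : ∀ X Y, ⟪J X, Y⟫ = -⟪X, J Y⟫) (hA : A.IsSymmetric) :
    LinearMap.trace ℝ V (J ∘ₗ A) = 0 := by
  let e := stdOrthonormalBasis ℝ V
  have trace_eq_neg : LinearMap.trace ℝ V (J ∘ₗ A) = -LinearMap.trace ℝ V (J ∘ₗ A) := calc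
    LinearMap.trace ℝ V (J ∘ₗ A) = ∑ i, ⟪J (A (e i)), e i⟫ :=
      trace_eq_sum_inner_map e _
    _ = -∑ i, ⟪e i, A (J (e i))⟫ := by
      simp only [hJ, hA (e _), Finset.sum_neg_distrib]
    _ = -LinearMap.trace ℝ V (A ∘ₗ J) := by
      rw [LinearMap.trace_eq_sum_inner _ e]
      rfl
    _ = -LinearMap.trace ℝ V (J ∘ₗ A) := by rw [LinearMap.trace_comp_comm']
  linarith

theorem trace_eq_zero_of_skew {J : V →ₗ[ℝ] V} (hJ : ∀ X Y, ⟪J X, Y⟫ = -⟪X, J Y⟫) :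
    LinearMap.trace ℝ V J = 0 :=
  trace_comp_eq_zero_of_skew_of_isSymmetric hJ LinearMap.IsSymmetric.id

theorem trace_kahlerKulkarniNomizu {J A : V →ₗ[ℝ] V} (hJ : ∀ X Y, ⟪J X, Y⟫ = -⟪X, J Y⟫)
    (hJJ : ∀ X, J (J X) = -X) (hA : A.IsSymmetric) (Y Z : V) :
    LinearMap.trace ℝ V (kahlerKulkarniNomizu J A Y Z) =
      (Module.finrank ℝ V + 4) * ⟪A Y, Z⟫ + LinearMap.trace ℝ V A * ⟪Y, Z⟫ := by
  have inner_comm_A : ⟪Y, A Z⟫ = ⟪Z, A Y⟫ := by rw [← hA, real_inner_comm]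
  simp only [kahlerKulkarniNomizu, map_add, map_sub, map_smul, LinearMap.trace_smulRight,
    LinearMap.trace_id, trace_eq_zero_of_skew hJ, trace_comp_eq_zero_of_skew_of_isSymmetric hJ hA,
    LinearMap.comp_apply, innerₗ_apply_apply, hJJ, map_neg, smul_eq_mul, inner_comm_A,
    real_inner_comm Z (A Y)]
  ring

theorem sum_trace_kahlerKulkarniNomizu {ι : Type*} [Fintype ι] {J A : V →ₗ[ℝ] V}
    (hJ : ∀ X Y, ⟪J X, Y⟫ = -⟪X, J Y⟫) (hJJ : ∀ X, J (J X) = -X) (hA : A.IsSymmetric)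
    (e : OrthonormalBasis ι ℝ V) :
    ∑ i, LinearMap.trace ℝ V (kahlerKulkarniNomizu J A (e i) (e i)) =
      2 * (Module.finrank ℝ V + 2) * LinearMap.trace ℝ V A := by
  have sum_inner_self : ∑ i, ⟪e i, e i⟫ = Module.finrank ℝ V := by
    simp [Module.finrank_eq_card_basis e.toBasis]
  simp only [trace_kahlerKulkarniNomizu hJ hJJ hA, Finset.sum_add_distrib, ← Finset.mul_sum,
    ← trace_eq_sum_inner_map, sum_inner_self]
  ring

theorem trace_eq_two_mul_add_finrank_mul {J A : V →ₗ[ℝ] V} {ω : V →ₗ[ℝ] ℝ} {P : V} {c : ℝ}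
    (hJ : ∀ X Y, ⟪J X, Y⟫ = -⟪X, J Y⟫) (hJJ : ∀ X, J (J X) = -X) (hP : ∀ X, ⟪P, X⟫ = ω X)
    (hA : ∀ X Y, ⟪A X, Y⟫ = ω X * ω Y + ω (J X) * ω (J Y) + c * ⟪X, Y⟫) :
    LinearMap.trace ℝ V A = 2 * ω P + Module.finrank ℝ V * c := by
  rw [eq_smulRight_sub_smulRight_add_smul_id hJ hP hA]
  simp only [map_add, map_sub, map_smul, LinearMap.trace_smulRight, LinearMap.trace_id,
    LinearMap.comp_apply, hJJ, map_neg, smul_eq_mul]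
  ring

end

/-- For `R = −E_L` with
`L(X,Y) = ω(X)ω(Y) + ω(JX)ω(JY) + (1/2)ω(P)g(X,Y)`, the Ricci contraction equals
`−2(n+2){ω(Y)ω(Z) + ω(JY)ω(JZ) + ω(P)g(Y,Z)}` and the scalar trace equals
`−4(n+1)(n+2)ω(P)`. -/
theorem ricci_and_scalar_of_neg_eL
    (n : ℕ) (hn : 1 ≤ n)
    {V : Type*} [NormedAddCommGroup V] [InnerProductSpace ℝ V] [FiniteDimensional ℝ V]
    (hdim : Module.finrank ℝ V = 2 * n)
    (J : V →ₗ[ℝ] V)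
    (hJiso : ∀ X Y : V, ⟪J X, J Y⟫ = ⟪X, Y⟫)
    (hJJ : ∀ X : V, J (J X) = -X)
    (ω : V →ₗ[ℝ] ℝ) (P : V) (hP : ∀ X : V, ⟪P, X⟫ = ω X)
    (L : V → V → ℝ)
    (hL : ∀ X Y : V, L X Y = ω X * ω Y + ω (J X) * ω (J Y) + (1 / 2) * ω P * ⟪X, Y⟫)
    (Lhat : V →ₗ[ℝ] V)
    (hLhat : ∀ X Y : V, ⟪Lhat X, Y⟫ = L X Y)
    (E : V → V → V → V)
    (hE : ∀ X Y Z : V, E X Y Z =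
      L Y Z • X - L X Z • Y + ⟪Y, Z⟫ • Lhat X - ⟪X, Z⟫ • Lhat Y
        + L (J Y) Z • J X - L (J X) Z • J Y - (2 * L (J X) Y) • J Z
        + ⟪J Y, Z⟫ • J (Lhat X) - ⟪J X, Z⟫ • J (Lhat Y)
        - (2 * ⟪J X, Y⟫) • J (Lhat Z))
    (R : V → V → V → V)
    (hR : ∀ X Y Z : V, R X Y Z = - E X Y Z)
    (e : OrthonormalBasis (Fin (2 * n)) ℝ V)
    (ρ : V → V → ℝ)
    (hρ : ∀ Y Z : V, ρ Y Z = ∑ i, ⟪R (e i) Y Z, e i⟫)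
    (τ : ℝ)
    (hτ : τ = ∑ i, ρ (e i) (e i)) :
    (∀ Y Z : V, ρ Y Z =
        -2 * ((n : ℝ) + 2) * (ω Y * ω Z + ω (J Y) * ω (J Z) + ω P * ⟪Y, Z⟫))
    ∧ τ = -4 * ((n : ℝ) + 1) * ((n : ℝ) + 2) * ω P := by
  have hJ := inner_map_eq_neg_inner_map_of_map_map_eq_neg hJiso hJJ
  have hform X Y : ⟪Lhat X, Y⟫ = ω X * ω Y + ω (J X) * ω (J Y) + (1 / 2) * ω P * ⟪X, Y⟫ := by
    rw [hLhat, hL]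
  have hsymm : Lhat.IsSymmetric := fun X Y => by
    rw [hform, real_inner_comm (Lhat Y), hform, real_inner_comm]
    ring
  have htrace : LinearMap.trace ℝ V Lhat = (n + 2) * ω P := by
    rw [trace_eq_two_mul_add_finrank_mul hJ hJJ hP hform, hdim]
    push_cast
    ring
  have hRicci Y Z : ρ Y Z = -LinearMap.trace ℝ V (kahlerKulkarniNomizu J Lhat Y Z) := by
    simp only [hρ, hR, hE, ← hLhat, ← kahlerKulkarniNomizu_apply, inner_neg_left,
      Finset.sum_neg_distrib, trace_eq_sum_inner_map e]
  constructor
  · intro Y Z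
    rw [hRicci, trace_kahlerKulkarniNomizu hJ hJJ hsymm, htrace, hform, hdim]
    push_cast
    ring
  · simp only [hτ, hRicci, Finset.sum_neg_distrib]
    rw [sum_trace_kahlerKulkarniNomizu hJ hJJ hsymm, htrace, hdim]
    push_cast
    ring
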